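/- arXiv:math/0406284 — 5 statements merged into one kernel-verified Lean document; each statement's English description precedes it below -/
import Mathlib

section
/- For every positive integer s, the number of lattice points in the dilation sP of the truncated regular simplex P, namely the cardinality of {x ∈ ℤ³ : 0 ≤ 3(x₁+x₂−x₃) ≤ 4s, 0 ≤ 3(x₁−x₂+x₃) ≤ 4s, 0 ≤ 3(−x₁+x₂+x₃) ≤ 4s, and 2s ≤ 3(x₁+x₂+x₃) ≤ 6s}, equals (23/81)s³ + (7/9)s² + (13/9)s + 1 if s ≡ 0 (mod 3); equals (23/81)s³ + (19/27)s² + (5/27)s − 95/81 if s ≡ 1 (mod 3); and equals (23/81)s³ + (17/27)s² + (23/27)s + 41/81 if s ≡ 2 (mod 3). -/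
open Finset

/-!
The heights of a lattice point above the four facets of `sT` are integers of a common parity with
sum `2s`, and conversely every such quadruple comes from a unique lattice point. The point lies in
`sP` exactly when its heights lie between `0` and `⌊4s/3⌋`. Writing the heights as `2tᵢ + e`, where
`e ∈ {0, 1}` is their parity, turns the count into two counts of quadruples of natural numbers with
prescribed sum and bounded entries.

The quadruples with sum `n` that violate the bound `m` form four corners, each a translate of the
smaller simplex of quadruples with sum `n - m - 1`. They are disjoint when `n < 2(m + 1)`, so
only the first two terms of inclusion-exclusion survive.
-/

section BoundedPiAntidiag

variable {ι : Type*} [DecidableEq ι] {s : Finset ι} {i : ι} {d n m : ℕ}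

lemma card_piAntidiag_nat (hs : #s = d + 1) (n : ℕ) :
    #(piAntidiag s n) = (n + 1).multichoose d := by
  have hsym : #(piAntidiag s n) = (#s).multichoose n := by
    rw [← card_finsuppAntidiag_nat_eq_multichoose, finsuppAntidiag, card_map, card_attach]
  rw [hsym, hs, Nat.multichoose_eq, Nat.multichoose_eq, Nat.add_right_comm, Nat.add_right_comm n,
    Nat.add_sub_cancel, Nat.add_sub_cancel, Nat.add_comm, Nat.choose_symm_add]

lemma filter_le_apply_piAntidiag (hi : i ∈ s) (n k : ℕ) :
    {t ∈ piAntidiag s (n + k) | k ≤ t i} =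
      (piAntidiag s n).map (addRightEmbedding (Pi.single i k)) := by
  ext t
  simp only [mem_filter, mem_map, mem_piAntidiag, addRightEmbedding_apply]
  constructor
  · rintro ⟨⟨hsum, hsupp⟩, hk⟩
    have ht : t - Pi.single i k + Pi.single i k = t := by
      ext j
      rcases eq_or_ne j i with rfl | hj <;> simp [*]
    refine ⟨t - Pi.single i k, ⟨?_, fun j hj ↦ hsupp j fun h ↦ hj (by simp [h])⟩, ht⟩
    rw [← ht] at hsum
    simpa [sum_add_distrib, hi] using hsum
  · rintro ⟨u, ⟨rfl, hsupp⟩, rfl⟩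
    refine ⟨⟨by simp [sum_add_distrib, hi], fun j hj ↦ ?_⟩, by simp⟩
    rcases eq_or_ne j i with rfl | hji
    · exact hi
    · exact hsupp j (by simpa [hji] using hj)

/-- When `n ≤ m` the corner is empty, in agreement with `Nat.multichoose 0 (d + 1) = 0`. -/
lemma card_filter_lt_apply_piAntidiag (hs : #s = d + 2) (hi : i ∈ s) (n m : ℕ) :
    #{t ∈ piAntidiag s n | m < t i} = (n - m).multichoose (d + 1) := by
  rcases le_or_gt n m with hnm | hmn
  · rw [Nat.sub_eq_zero_of_le hnm, Nat.multichoose_zero_succ, card_eq_zero, filter_eq_empty_iff]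
    rintro t ht hlt
    have hle : t i ≤ ∑ j ∈ s, t j := single_le_sum (fun _ _ ↦ Nat.zero_le _) hi
    rw [(mem_piAntidiag.1 ht).1] at hle
    omega
  · obtain ⟨k, rfl⟩ : ∃ k, n = k + (m + 1) := ⟨n - (m + 1), by omega⟩
    have hcorner := congrArg card (filter_le_apply_piAntidiag hi k (m + 1))
    rw [card_map, card_piAntidiag_nat hs] at hcorner
    rw [show k + (m + 1) - m = k + 1 by omega]
    exact hcorner

/-- The functions `ι → ℕ` supported in `s`, with sum `n` and all values at most `m`: the lattice
points of a dilated standard simplex whose vertices are cut off at height `m`. -/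
def boundedPiAntidiag (s : Finset ι) (n m : ℕ) : Finset (ι → ℕ) :=
  {t ∈ piAntidiag s n | ∀ i ∈ s, t i ≤ m}

lemma mem_boundedPiAntidiag_univ [Fintype ι] {t : ι → ℕ} :
    t ∈ boundedPiAntidiag univ n m ↔ ∑ i, t i = n ∧ ∀ i, t i ≤ m := by
  simp [boundedPiAntidiag]

lemma pairwiseDisjoint_filter_lt_apply_piAntidiag (hn : n < 2 * (m + 1)) :
    (s : Set ι).PairwiseDisjoint fun i ↦ {t ∈ piAntidiag s n | m < t i} := by
  refine fun i hi j hj hij ↦ disjoint_left.2 fun t hti htj ↦ ?_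
  rw [mem_filter, mem_piAntidiag] at hti htj
  have hle : t i + t j ≤ ∑ k ∈ s, t k := add_le_sum (fun _ _ ↦ Nat.zero_le _) hi hj hij
  rw [hti.1.1] at hle
  omega

lemma card_boundedPiAntidiag_add (hs : #s = d + 2) (hn : n < 2 * (m + 1)) :
    #(boundedPiAntidiag s n m) + #s * (n - m).multichoose (d + 1) =
      (n + 1).multichoose (d + 1) := by
  have hcompl : {t ∈ piAntidiag s n | ¬ ∀ i ∈ s, t i ≤ m} =
      s.disjiUnion _ (pairwiseDisjoint_filter_lt_apply_piAntidiag hn) := by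
    ext t
    simp only [mem_filter, mem_disjiUnion, not_forall, not_le, exists_prop]
    tauto
  have hcorners : #{t ∈ piAntidiag s n | ¬ ∀ i ∈ s, t i ≤ m} =
      #s * (n - m).multichoose (d + 1) := by
    rw [hcompl, card_disjiUnion, sum_congr rfl fun i hi ↦
      card_filter_lt_apply_piAntidiag hs hi n m, sum_const, smul_eq_mul]
  rw [← hcorners, boundedPiAntidiag, card_filter_add_card_filter_not, card_piAntidiag_nat hs]

lemma cast_multichoose_three (K : Type*) [Field K] [CharZero K] (n : ℕ) :
    (n.multichoose 3 : K) = n * (n + 1) * (n + 2) / 6 := by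
  have h : Nat.factorial 3 * n.multichoose 3 = n * (n + 1) * (n + 2) := by
    rw [Nat.multichoose_eq, ← Nat.ascFactorial_eq_factorial_mul_choose']
    simp only [Nat.ascFactorial]
    ring
  rw [eq_div_iff (by norm_num), mul_comm]
  exact_mod_cast h

lemma cast_card_boundedPiAntidiag (hs : #s = 4) {p : ℕ} (hp : n = m + p) (hpm : p < m + 2) :
    (#(boundedPiAntidiag s n m) : ℚ) =
      (n + 1) * (n + 2) * (n + 3) / 6 - 4 * (p * (p + 1) * (p + 2) / 6) := by
  have h := card_boundedPiAntidiag_add hs (n := n) (m := m) (by omega)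
  rw [hs, show n - m = p by omega] at h
  have hcast : (#(boundedPiAntidiag s n m) : ℚ) + 4 * p.multichoose 3 = (n + 1).multichoose 3 := by
    exact_mod_cast h
  rw [cast_multichoose_three, cast_multichoose_three] at hcast
  push_cast at hcast
  linarith

end BoundedPiAntidiag

section Tetrahedron

variable {s n M e : ℕ} {t : Fin 4 → ℕ}

/-- The heights of `x` above the four facets of `sT`: its barycentric coordinates with respect to
`T`, scaled so that they sum to `2s`. -/
def facetHeight (s : ℕ) (x : Fin 3 → ℤ) : Fin 4 → ℤ :=
  ![-x 0 + x 1 + x 2, x 0 - x 1 + x 2, x 0 + x 1 - x 2, 2 * s - (x 0 + x 1 + x 2)]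

/-- The lattice points of `sT` whose heights above the facets are at most `M`, that is, of `sT` with
its vertices cut off at height `M`. -/
def truncatedTetrahedron (s M : ℕ) : Set (Fin 3 → ℤ) :=
  {x | ∀ i, 0 ≤ facetHeight s x i ∧ facetHeight s x i ≤ M}

lemma sum_facetHeight (s : ℕ) (x : Fin 3 → ℤ) : ∑ i, facetHeight s x i = 2 * s := by
  simp only [facetHeight, Fin.sum_univ_four, Matrix.cons_val]
  ring

lemma facetHeight_emod_two (s : ℕ) (x : Fin 3 → ℤ) (i : Fin 4) :
    facetHeight s x i % 2 = (∑ j, x j) % 2 := by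
  rw [Fin.sum_univ_three]
  fin_cases i <;> simp only [facetHeight, Fin.reduceFinMk, Matrix.cons_val] <;> omega

lemma facetHeight_injective (s : ℕ) : Function.Injective (facetHeight s) := by
  intro x y h
  have h0 := congrFun h 0
  have h1 := congrFun h 1
  have h2 := congrFun h 2
  simp only [facetHeight, Matrix.cons_val] at h0 h1 h2
  ext i
  fin_cases i <;> simp only [Fin.reduceFinMk] <;> omega

/-- The lattice point whose heights above the facets of `sT` are `2 * t i + e`. The dilation factor
is forced to be `s = ∑ i, t i + 2 * e`, because the heights sum to `2 * s`. -/
def latticePoint (e : ℕ) (t : Fin 4 → ℕ) : Fin 3 → ℤ :=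
  ![t 1 + t 2 + e, t 0 + t 2 + e, t 0 + t 1 + e]

lemma facetHeight_latticePoint (e : ℕ) (ht : ∑ i, t i = n) (i : Fin 4) :
    facetHeight (n + 2 * e) (latticePoint e t) i = 2 * t i + e := by
  rw [Fin.sum_univ_four] at ht
  fin_cases i <;> simp only [facetHeight, latticePoint, Fin.reduceFinMk, Matrix.cons_val] <;> omega

lemma injOn_latticePoint (e n m : ℕ) :
    Set.InjOn (latticePoint e) (boundedPiAntidiag (univ : Finset (Fin 4)) n m) := by
  intro t ht u hu h
  rw [mem_coe, mem_boundedPiAntidiag_univ] at ht hu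
  ext i
  have hi := congrArg (facetHeight (n + 2 * e) · i) h
  simp only [facetHeight_latticePoint e ht.1, facetHeight_latticePoint e hu.1] at hi
  omega

/-- The lattice points of a truncated tetrahedron whose heights above the facets have the parity
of `e`, read off from the coordinate sum, to which all four heights are congruent modulo `2`. -/
def parityClass (s M e : ℕ) : Set (Fin 3 → ℤ) :=
  {x ∈ truncatedTetrahedron s M | (∑ i, x i) % 2 = e}

lemma image_latticePoint (he : e < 2) (heM : e ≤ M) (n : ℕ) :
    latticePoint e '' boundedPiAntidiag (univ : Finset (Fin 4)) n ((M - e) / 2) =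
      parityClass (n + 2 * e) M e := by
  ext x
  simp only [Set.mem_image, mem_coe, mem_boundedPiAntidiag_univ]
  constructor
  · rintro ⟨t, ⟨hsum, hle⟩, rfl⟩
    have hheight := facetHeight_latticePoint e hsum
    refine ⟨fun i ↦ ?_, ?_⟩
    · specialize hle i
      rw [hheight]
      omega
    · rw [← facetHeight_emod_two (n + 2 * e) _ 0, hheight]
      omega
  · rintro ⟨hx, hpar⟩
    have hhalf (i) : ∃ k : ℕ, facetHeight (n + 2 * e) x i = 2 * k + e := by
      have hnonneg := (hx i).1
      have hparity := (facetHeight_emod_two (n + 2 * e) x i).trans hpar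
      exact ⟨((facetHeight (n + 2 * e) x i - e) / 2).toNat, by omega⟩
    choose t ht using hhalf
    have hsum : ∑ i, t i = n := by
      have := sum_facetHeight (n + 2 * e) x
      simp only [ht, Fin.sum_univ_four] at this ⊢
      push_cast at this
      omega
    refine ⟨t, ⟨hsum, fun i ↦ ?_⟩, facetHeight_injective (n + 2 * e) <| funext fun i ↦ ?_⟩
    · have := (hx i).2
      rw [ht] at this
      omega
    · rw [facetHeight_latticePoint e hsum, ht]

lemma finite_parityClass (he : e < 2) (heM : e ≤ M) (n : ℕ) :
    (parityClass (n + 2 * e) M e).Finite := by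
  rw [← image_latticePoint he heM]
  exact (finite_toSet _).image _

lemma ncard_parityClass (he : e < 2) (heM : e ≤ M) (n : ℕ) :
    (parityClass (n + 2 * e) M e).ncard =
      #(boundedPiAntidiag (univ : Finset (Fin 4)) n ((M - e) / 2)) := by
  rw [← image_latticePoint he heM, (injOn_latticePoint _ _ _).ncard_image,
    Set.ncard_coe_finset]

lemma parityClass_union (s M : ℕ) :
    parityClass s M 0 ∪ parityClass s M 1 = truncatedTetrahedron s M := by
  ext x
  simp only [parityClass, Set.mem_union, Set.mem_sep_iff, Nat.cast_zero, Nat.cast_one,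
    ← and_or_left, Int.emod_two_eq_zero_or_one, and_true]

lemma disjoint_parityClass (s M : ℕ) : Disjoint (parityClass s M 0) (parityClass s M 1) :=
  Set.disjoint_left.2 fun _ h0 h1 ↦ by simpa [h1.2] using h0.2

lemma ncard_truncatedTetrahedron (n : ℕ) (hM : 1 ≤ M) :
    (truncatedTetrahedron (n + 2) M).ncard =
      #(boundedPiAntidiag (univ : Finset (Fin 4)) (n + 2) (M / 2)) +
        #(boundedPiAntidiag (univ : Finset (Fin 4)) n ((M - 1) / 2)) := by
  rw [← parityClass_union, Set.ncard_union_eq (disjoint_parityClass _ _)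
    (finite_parityClass Nat.two_pos M.zero_le _) (finite_parityClass Nat.one_lt_two hM _)]
  exact congrArg₂ _ (ncard_parityClass Nat.two_pos M.zero_le _)
    (ncard_parityClass Nat.one_lt_two hM _)

lemma cast_ncard_truncatedTetrahedron {p q : ℕ} (hp : s = M / 2 + p)
    (hq : s = (M - 1) / 2 + q + 2) (hpM : p < M / 2 + 2) :
    ((truncatedTetrahedron s M).ncard : ℚ) =
      (s + 1) * (s ^ 2 + 2 * s + 3) / 3 -
        2 / 3 * (p * (p + 1) * (p + 2) + q * (q + 1) * (q + 2)) := by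
  obtain ⟨n, rfl⟩ : ∃ n, s = n + 2 := ⟨_, hq⟩
  have hfour : #(univ : Finset (Fin 4)) = 4 := card_fin 4
  rw [ncard_truncatedTetrahedron n (by omega), Nat.cast_add,
    cast_card_boundedPiAntidiag hfour hp hpM,
    cast_card_boundedPiAntidiag hfour (p := q) (by omega) (by omega)]
  push_cast
  ring

lemma mem_truncatedTetrahedron_four_thirds (s : ℕ) (x : Fin 3 → ℤ) :
    x ∈ truncatedTetrahedron s (4 * s / 3) ↔
      0 ≤ 3 * (x 0 + x 1 - x 2) ∧ 3 * (x 0 + x 1 - x 2) ≤ 4 * (s : ℤ) ∧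
      0 ≤ 3 * (x 0 - x 1 + x 2) ∧ 3 * (x 0 - x 1 + x 2) ≤ 4 * (s : ℤ) ∧
      0 ≤ 3 * (-x 0 + x 1 + x 2) ∧ 3 * (-x 0 + x 1 + x 2) ≤ 4 * (s : ℤ) ∧
      2 * (s : ℤ) ≤ 3 * (x 0 + x 1 + x 2) ∧ 3 * (x 0 + x 1 + x 2) ≤ 6 * (s : ℤ) := by
  simp only [truncatedTetrahedron, facetHeight, Set.mem_ofPred_eq, Fin.forall_fin_succ,
    Matrix.cons_val_zero, Matrix.cons_val_succ, IsEmpty.forall_iff, and_true]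
  omega

lemma truncatedTetrahedron_one_one : truncatedTetrahedron 1 1 = ∅ := by
  refine Set.eq_empty_of_forall_notMem fun x hx ↦ ?_
  have := (mem_truncatedTetrahedron_four_thirds 1 x).1 hx
  omega

end Tetrahedron

theorem truncated_simplex_ehrhart (s : ℕ) (hs : 0 < s) :
    (s % 3 = 0 →
      ((Nat.card {x : Fin 3 → ℤ //
          0 ≤ 3 * (x 0 + x 1 - x 2) ∧ 3 * (x 0 + x 1 - x 2) ≤ 4 * (s : ℤ) ∧
          0 ≤ 3 * (x 0 - x 1 + x 2) ∧ 3 * (x 0 - x 1 + x 2) ≤ 4 * (s : ℤ) ∧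
          0 ≤ 3 * (-x 0 + x 1 + x 2) ∧ 3 * (-x 0 + x 1 + x 2) ≤ 4 * (s : ℤ) ∧
          2 * (s : ℤ) ≤ 3 * (x 0 + x 1 + x 2) ∧ 3 * (x 0 + x 1 + x 2) ≤ 6 * (s : ℤ)} : ℚ) =
        23 / 81 * (s : ℚ) ^ 3 + 7 / 9 * (s : ℚ) ^ 2 + 13 / 9 * (s : ℚ) + 1)) ∧
    (s % 3 = 1 →
      ((Nat.card {x : Fin 3 → ℤ //
          0 ≤ 3 * (x 0 + x 1 - x 2) ∧ 3 * (x 0 + x 1 - x 2) ≤ 4 * (s : ℤ) ∧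
          0 ≤ 3 * (x 0 - x 1 + x 2) ∧ 3 * (x 0 - x 1 + x 2) ≤ 4 * (s : ℤ) ∧
          0 ≤ 3 * (-x 0 + x 1 + x 2) ∧ 3 * (-x 0 + x 1 + x 2) ≤ 4 * (s : ℤ) ∧
          2 * (s : ℤ) ≤ 3 * (x 0 + x 1 + x 2) ∧ 3 * (x 0 + x 1 + x 2) ≤ 6 * (s : ℤ)} : ℚ) =
        23 / 81 * (s : ℚ) ^ 3 + 19 / 27 * (s : ℚ) ^ 2 + 5 / 27 * (s : ℚ) - 95 / 81)) ∧
    (s % 3 = 2 →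
      ((Nat.card {x : Fin 3 → ℤ //
          0 ≤ 3 * (x 0 + x 1 - x 2) ∧ 3 * (x 0 + x 1 - x 2) ≤ 4 * (s : ℤ) ∧
          0 ≤ 3 * (x 0 - x 1 + x 2) ∧ 3 * (x 0 - x 1 + x 2) ≤ 4 * (s : ℤ) ∧
          0 ≤ 3 * (-x 0 + x 1 + x 2) ∧ 3 * (-x 0 + x 1 + x 2) ≤ 4 * (s : ℤ) ∧
          2 * (s : ℤ) ≤ 3 * (x 0 + x 1 + x 2) ∧ 3 * (x 0 + x 1 + x 2) ≤ 6 * (s : ℤ)} : ℚ) =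
        23 / 81 * (s : ℚ) ^ 3 + 17 / 27 * (s : ℚ) ^ 2 + 23 / 27 * (s : ℚ) + 41 / 81)) := by
  simp only [← mem_truncatedTetrahedron_four_thirds, Nat.card_coe_set_eq]
  refine ⟨fun h ↦ ?_, fun h ↦ ?_, fun h ↦ ?_⟩
  · obtain ⟨k, rfl⟩ : ∃ k, s = 3 * k + 3 := ⟨s / 3 - 1, by omega⟩
    rw [cast_ncard_truncatedTetrahedron (p := k + 1) (q := k) (by omega) (by omega) (by omega)]
    push_cast
    ring
  · obtain rfl | ⟨k, rfl⟩ : s = 1 ∨ ∃ k, s = 3 * k + 4 := by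
      rcases eq_or_ne s 1 with hs1 | hs1
      · exact .inl hs1
      · exact .inr ⟨s / 3 - 1, by omega⟩
    · rw [truncatedTetrahedron_one_one, Set.ncard_empty]
      norm_num
    · rw [cast_ncard_truncatedTetrahedron (p := k + 2) (q := k) (by omega) (by omega) (by omega)]
      push_cast
      ring
  · obtain ⟨k, rfl⟩ : ∃ k, s = 3 * k + 2 := ⟨s / 3, by omega⟩
    rw [cast_ncard_truncatedTetrahedron (p := k + 1) (q := k) (by omega) (by omega) (by omega)]
    push_cast
    ring
end

section
/- For every positive integer s, the number of lattice points in the dilation sP of the 24-cell P, namely the cardinality of {x ∈ ℤ⁴ : |x_i| ≤ s for i = 1,…,4, and ε₁x₁+ε₂x₂+ε₃x₃+ε₄x₄ ≤ 2s for every ε ∈ {−1,1}⁴}, equals 8s⁴ + (32/3)s³ + 8s² + (16/3)s + 1. -/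
/-!
The sixteen inequalities `∑ εᵢ xᵢ ≤ 2s` together say that `x` has `ℓ¹`-norm at most `2s`, so `sP`
is the cross-polytope of radius `2s` truncated by the cube `[-s, s]⁴`. The truncation cuts off the
eight caps `|xᵢ| > s`. They have no lattice point in common, as two coordinates larger than `s` in
absolute value already contribute at least `2s + 2` to the norm, and the slices of a cap are
three-dimensional cross-polytopes of radii `0, …, s - 1`. The same slicing, now with the cap
`|xᵢ| > 0`, yields by induction on the dimension that the `n`-dimensional cross-polytope of radius
`r` contains `∑ k, 2 ^ k * n.choose k * r.choose k` lattice points.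
-/

open Finset

theorem natAbs_le_of_sum_natAbs_le {ι : Type*} [Fintype ι] {x : ι → ℤ} {r : ℕ}
    (hx : ∑ i, (x i).natAbs ≤ r) (i : ι) : (x i).natAbs ≤ r :=
  (single_le_sum_of_canonicallyOrdered (f := fun j ↦ (x j).natAbs) (mem_univ i)).trans hx

/-- The lattice points of the `n`-dimensional cross-polytope of radius `r`, that is, the closed ball
of radius `r` about the origin of `ℤⁿ` for the `ℓ¹`-norm. It is cut out of a cube only to make it a
`Finset`; see `mem_l1Ball`. -/
noncomputable def l1Ball (n r : ℕ) : Finset (Fin n → ℤ) :=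
  {x ∈ Fintype.piFinset fun _ ↦ Icc (-(r : ℤ)) r | ∑ i, (x i).natAbs ≤ r}

@[simp]
theorem mem_l1Ball {n r : ℕ} {x : Fin n → ℤ} : x ∈ l1Ball n r ↔ ∑ i, (x i).natAbs ≤ r := by
  refine ⟨fun hx ↦ (mem_filter.1 hx).2, fun hx ↦ ?_⟩
  refine mem_filter.2 ⟨Fintype.mem_piFinset.2 fun i ↦ ?_, hx⟩
  have hi := natAbs_le_of_sum_natAbs_le hx i
  rw [mem_Icc]
  omega

section Slicing

variable {n : ℕ} (i : Fin (n + 1))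

theorem card_l1Ball_filter_eq (r : ℕ) (a : ℤ) :
    #{x ∈ l1Ball (n + 1) (r + a.natAbs) | x i = a} = #(l1Ball n r) := by
  refine card_nbij' i.removeNth (fun y ↦ i.insertNth a y) ?_ ?_ ?_ ?_
  · intro x hx
    rw [mem_coe, mem_filter, mem_l1Ball, Fin.sum_univ_succAbove _ i] at hx
    obtain ⟨hsum, rfl⟩ := hx
    rw [mem_coe, mem_l1Ball]
    simp only [Fin.removeNth]
    omega
  · intro y hy
    rw [mem_coe, mem_l1Ball] at hy
    rw [mem_coe, mem_filter, mem_l1Ball, Fin.sum_univ_succAbove _ i]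
    simp only [Fin.insertNth_apply_same, Fin.insertNth_apply_succAbove, and_true]
    omega
  · intro x hx
    obtain rfl : x i = a := (mem_filter.1 hx).2
    exact i.insertNth_self_removeNth x
  · intro y _
    exact i.removeNth_insertNth (α := fun _ ↦ ℤ) a y

theorem card_l1Ball_filter_natAbs_eq (r : ℕ) {m : ℕ} (hm : m ≠ 0) :
    #{x ∈ l1Ball (n + 1) (r + m) | (x i).natAbs = m} = 2 * #(l1Ball n r) := by
  have hdisj : Disjoint {x ∈ l1Ball (n + 1) (r + m) | x i = (m : ℤ)}
      {x ∈ l1Ball (n + 1) (r + m) | x i = -(m : ℤ)} :=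
    disjoint_filter.2 fun x _ hpos hneg ↦ by omega
  have hpos := card_l1Ball_filter_eq i r m
  have hneg := card_l1Ball_filter_eq i r (-m)
  rw [Int.natAbs_natCast] at hpos
  rw [Int.natAbs_neg, Int.natAbs_natCast] at hneg
  simp_rw [Int.natAbs_eq_iff]
  rw [filter_or, card_union_of_disjoint hdisj, hpos, hneg, two_mul]

theorem card_l1Ball_filter_lt_natAbs (r s : ℕ) :
    #{x ∈ l1Ball (n + 1) r | s < (x i).natAbs} = 2 * ∑ k ∈ range (r - s), #(l1Ball n k) := by
  have hle (x) (hx : x ∈ l1Ball (n + 1) r) : (x i).natAbs ≤ r :=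
    natAbs_le_of_sum_natAbs_le (mem_l1Ball.1 hx) i
  have hmaps : ∀ x ∈ {x ∈ l1Ball (n + 1) r | s < (x i).natAbs},
      r - (x i).natAbs ∈ range (r - s) := fun x hx ↦ by
    obtain ⟨hx, hs⟩ := mem_filter.1 hx
    have := hle x hx
    rw [mem_range]
    omega
  rw [card_eq_sum_card_fiberwise hmaps, mul_sum]
  refine sum_congr rfl fun k hk ↦ ?_
  rw [mem_range] at hk
  obtain ⟨m, rfl⟩ : ∃ m, r = k + m := Nat.exists_eq_add_of_le (by omega)
  rw [← card_l1Ball_filter_natAbs_eq i k (m := m) (by omega), filter_filter]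
  refine congrArg card (filter_congr fun x hx ↦ ?_)
  have := hle x hx
  omega

end Slicing

theorem card_l1Ball_zero (r : ℕ) : #(l1Ball 0 r) = 1 :=
  card_eq_one.2 ⟨0, by ext x; simp [Subsingleton.elim x 0]⟩

theorem card_l1Ball_succ (n r : ℕ) :
    #(l1Ball (n + 1) r) = #(l1Ball n r) + 2 * ∑ k ∈ range r, #(l1Ball n k) := by
  have hslice := card_l1Ball_filter_eq (0 : Fin (n + 1)) r 0
  have hcap := card_l1Ball_filter_lt_natAbs (0 : Fin (n + 1)) r 0
  rw [← card_filter_add_card_filter_not (s := l1Ball (n + 1) r) (fun x ↦ x 0 = 0)]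
  simp_rw [Int.natAbs_pos] at hcap
  exact congrArg₂ (· + ·) hslice hcap

theorem sum_range_choose_eq_choose_succ (m k : ℕ) :
    ∑ j ∈ range m, j.choose k = m.choose (k + 1) := by
  induction m with
  | zero => simp
  | succ m ih => rw [sum_range_succ, ih, Nat.choose_succ_succ', add_comm]

theorem sum_range_sum_mul_choose {R : Type*} [Semiring R] (t : Finset ℕ) (c : ℕ → R) (m : ℕ) :
    ∑ j ∈ range m, ∑ k ∈ t, c k * j.choose k = ∑ k ∈ t, c k * m.choose (k + 1) := by
  rw [sum_comm]
  simp_rw [← mul_sum, ← Nat.cast_sum, sum_range_choose_eq_choose_succ]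

theorem sum_two_pow_mul_choose_succ_mul_choose (n r : ℕ) :
    ∑ k ∈ range (n + 2), 2 ^ k * (n + 1).choose k * r.choose k =
      ∑ k ∈ range (n + 1), 2 ^ k * n.choose k * r.choose k +
        2 * ∑ k ∈ range (n + 1), 2 ^ k * n.choose k * r.choose (k + 1) := by
  have hshift : ∑ k ∈ range (n + 1), 2 ^ (k + 1) * n.choose (k + 1) * r.choose (k + 1) + 1 =
      ∑ k ∈ range (n + 1), 2 ^ k * n.choose k * r.choose k := by
    have h := sum_range_succ' (fun k ↦ 2 ^ k * n.choose k * r.choose k) (n + 1)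
    rw [sum_range_succ] at h
    simpa using h.symm
  rw [← hshift, sum_range_succ', mul_sum, add_right_comm, ← sum_add_distrib]
  simp only [pow_zero, Nat.choose_zero_right, mul_one, Nat.choose_succ_succ' n]
  congr! 2
  ring

theorem card_l1Ball (n r : ℕ) :
    #(l1Ball n r) = ∑ k ∈ range (n + 1), 2 ^ k * n.choose k * r.choose k := by
  induction n generalizing r with
  | zero => simp [card_l1Ball_zero]
  | succ n ih =>
    have hsum := sum_range_sum_mul_choose (range (n + 1)) (fun k ↦ 2 ^ k * n.choose k) r
    simp only [Nat.cast_id] at hsum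
    simp_rw [card_l1Ball_succ, ih, hsum, sum_two_pow_mul_choose_succ_mul_choose]

theorem sum_range_card_l1Ball (n m : ℕ) :
    ∑ j ∈ range m, #(l1Ball n j) = ∑ k ∈ range (n + 1), 2 ^ k * n.choose k * m.choose (k + 1) := by
  simpa only [card_l1Ball, Nat.cast_id] using
    sum_range_sum_mul_choose (range (n + 1)) (fun k ↦ 2 ^ k * n.choose k) m

section Truncation

variable {n r s : ℕ}

theorem disjoint_l1Ball_filter_lt_natAbs (hr : r ≤ 2 * s + 1) {i j : Fin n} (hij : i ≠ j) :
    Disjoint {x ∈ l1Ball n r | s < (x i).natAbs} {x ∈ l1Ball n r | s < (x j).natAbs} := by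
  refine disjoint_filter.2 fun x hx hi hj ↦ ?_
  have hsum : (x i).natAbs + (x j).natAbs ≤ ∑ k, (x k).natAbs := by
    rw [← sum_pair (f := fun k ↦ (x k).natAbs) hij]
    exact sum_le_sum_of_subset (subset_univ _)
  rw [mem_l1Ball] at hx
  omega

theorem card_l1Ball_filter_forall_natAbs_le_add (hr : r ≤ 2 * s + 1) :
    #{x ∈ l1Ball (n + 1) r | ∀ i, (x i).natAbs ≤ s} +
      (n + 1) * (2 * ∑ k ∈ range (r - s), #(l1Ball n k)) = #(l1Ball (n + 1) r) := by
  have hcaps : {x ∈ l1Ball (n + 1) r | ¬ ∀ i, (x i).natAbs ≤ s} =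
      univ.biUnion fun i ↦ {x ∈ l1Ball (n + 1) r | s < (x i).natAbs} := by
    ext x
    simp
  rw [← card_filter_add_card_filter_not (s := l1Ball (n + 1) r) fun x ↦ ∀ i, (x i).natAbs ≤ s,
    hcaps, card_biUnion fun i _ j _ hij ↦ disjoint_l1Ball_filter_lt_natAbs hr hij]
  simp_rw [card_l1Ball_filter_lt_natAbs]
  simp

end Truncation

theorem forall_sign_sum_le_iff {ι R : Type*} [Fintype ι] [CommRing R] [LinearOrder R]
    [IsStrictOrderedRing R] {x : ι → R} {r : R} :
    (∀ ε : ι → R, (∀ i, ε i = 1 ∨ ε i = -1) → ∑ i, ε i * x i ≤ r) ↔ ∑ i, |x i| ≤ r := by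
  constructor
  · intro h
    have habs (i : ι) : (if 0 ≤ x i then 1 else -1) * x i = |x i| := by
      split_ifs with hi
      · rw [one_mul, abs_of_nonneg hi]
      · rw [neg_one_mul, abs_of_neg (not_le.1 hi)]
    simpa only [habs] using h (fun i ↦ if 0 ≤ x i then 1 else -1) fun i ↦ ite_eq_or_eq ..
  · intro h ε hε
    refine (sum_le_sum fun i _ ↦ ?_).trans h
    rcases hε i with hi | hi
    · simpa [hi] using le_abs_self (x i)
    · simpa [hi] using neg_le_abs (x i)

theorem cast_choose_eq_prod_range_div (K : Type*) [Field K] [CharZero K] (m k : ℕ) :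
    (m.choose k : K) = (∏ j ∈ range k, ((m : K) - j)) / k.factorial := by
  rw [Nat.cast_choose_eq_descPochhammer_div, descPochhammer_eval_eq_prod_range]

theorem card_l1Ball_four (r : ℕ) :
    (#(l1Ball 4 r) : ℚ) =
      (2 * (r : ℚ) ^ 4 + 4 * (r : ℚ) ^ 3 + 10 * (r : ℚ) ^ 2 + 8 * r + 3) / 3 := by
  rw [card_l1Ball]
  push_cast
  simp only [cast_choose_eq_prod_range_div, sum_range_succ, prod_range_succ, range_zero, sum_empty,
    prod_empty, Nat.factorial]
  push_cast
  ring

theorem sum_range_card_l1Ball_three (m : ℕ) :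
    ((∑ k ∈ range m, #(l1Ball 3 k) : ℕ) : ℚ) = (m : ℚ) ^ 2 * ((m : ℚ) ^ 2 + 2) / 3 := by
  rw [sum_range_card_l1Ball]
  push_cast
  simp only [cast_choose_eq_prod_range_div, sum_range_succ, prod_range_succ, range_zero, sum_empty,
    prod_empty, Nat.factorial]
  push_cast
  ring

theorem cell24_ehrhart (s : ℕ) (hs : 0 < s) :
    ((Nat.card {x : Fin 4 → ℤ //
        (∀ i, |x i| ≤ (s : ℤ)) ∧
        (∀ ε : Fin 4 → ℤ, (∀ i, ε i = 1 ∨ ε i = -1) →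
          ∑ i, ε i * x i ≤ 2 * (s : ℤ))} : ℚ) =
      8 * (s : ℚ) ^ 4 + 32 / 3 * (s : ℚ) ^ 3 + 8 * (s : ℚ) ^ 2 + 16 / 3 * (s : ℚ) + 1) := by
  have hcard : Nat.card {x : Fin 4 → ℤ // (∀ i, |x i| ≤ (s : ℤ)) ∧
      ∀ ε : Fin 4 → ℤ, (∀ i, ε i = 1 ∨ ε i = -1) → ∑ i, ε i * x i ≤ 2 * (s : ℤ)} =
      #{x ∈ l1Ball 4 (2 * s) | ∀ i, (x i).natAbs ≤ s} := by
    refine Nat.subtype_card _ fun x ↦ ?_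
    rw [forall_sign_sum_le_iff, mem_filter, mem_l1Ball, and_comm]
    zify
  have hcaps : (#{x ∈ l1Ball 4 (2 * s) | ∀ i, (x i).natAbs ≤ s} : ℚ) +
      4 * (2 * (∑ k ∈ range s, #(l1Ball 3 k) : ℕ)) = #(l1Ball 4 (2 * s)) := by
    have h := card_l1Ball_filter_forall_natAbs_le_add (n := 3) (Nat.le_succ (2 * s))
    rw [two_mul s, Nat.add_sub_cancel, ← two_mul] at h
    exact_mod_cast h
  rw [card_l1Ball_four, sum_range_card_l1Ball_three, Nat.cast_mul, Nat.cast_ofNat] at hcaps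
  rw [hcard]
  linear_combination hcaps
end

section
/- The equation 12223x₁ + 12224x₂ + 36674x₃ + 61119x₄ + 85569x₅ = 89643481 has no solution in nonnegative integers x₁,…,x₅, while the equation 12223x₁ + 12224x₂ + 36674x₃ + 61119x₄ + 85569x₅ = 89643482 has exactly one solution in nonnegative integers, namely (x₁,…,x₅) = (7334, 0, 0, 0, 0). -/
/-!
The vector `p = (1, 1, 3, 5, 7)` is nearly proportional to the coefficient vector `a`: in the
decomposition `a = 12224 * p + r` of Aardal and Lenstra, `r = (-1, 0, 2, -1, 1)` is short. The
extreme ratios `a i / p i` are `12223`, attained at the first coordinate only, and `36674 / 3`, so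
every nonnegative `x` satisfies `12223 * (p ⬝ᵥ x) ≤ a ⬝ᵥ x ≤ 36674 / 3 * (p ⬝ᵥ x)`. Since `p ⬝ᵥ x`
is an integer, `a ⬝ᵥ x` avoids the gap strictly between `36674 / 3 * 7333` and `12223 * 7334`,
whose only integer is `12223 * 7334 - 1 = 89643481`. At the upper end of the gap, `p ⬝ᵥ x = 7334`
and the lower bound is attained, so `x` is a multiple of the first unit vector.
-/

open scoped Matrix

namespace Knapsack

variable {ι : Type*} {a p : ι → ℕ} {i₀ : ι} {c u v k n : ℕ}

lemma smul_le_of_forall_ne_lt (hp : p i₀ = 1) (hlt : ∀ i ≠ i₀, a i₀ * p i < a i) :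
    a i₀ • p ≤ a := by
  intro i
  obtain rfl | hi := eq_or_ne i i₀
  · simp [hp]
  · exact (hlt i hi).le

variable [Fintype ι]

lemma eq_zero_of_dotProduct_eq_of_lt {R : Type*} [Semiring R] [PartialOrder R]
    [IsStrictOrderedRing R] {a b x : ι → R} (hab : a ≤ b) (hx : 0 ≤ x)
    (heq : a ⬝ᵥ x = b ⬝ᵥ x) {i : ι} (hi : a i < b i) : x i = 0 := by
  have hle : ∀ j ∈ Finset.univ, a j * x j ≤ b j * x j :=
    fun j _ ↦ mul_le_mul_of_nonneg_right (hab j) (hx j)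
  have hterm : a i * x i = b i * x i :=
    (Finset.sum_eq_sum_iff_of_le hle).mp heq i (Finset.mem_univ i)
  by_contra hne
  exact (mul_lt_mul_of_pos_right hi ((hx i).lt_of_ne' hne)).ne hterm

lemma mul_dotProduct_le (h : c • p ≤ a) (x : ι → ℕ) : c * (p ⬝ᵥ x) ≤ a ⬝ᵥ x := by
  simpa only [smul_dotProduct, smul_eq_mul] using
    dotProduct_le_dotProduct_of_nonneg_right h (zero_le (a := x))

lemma mul_dotProduct_le_mul (h : v • a ≤ u • p) (x : ι → ℕ) :
    v * (a ⬝ᵥ x) ≤ u * (p ⬝ᵥ x) := by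
  simpa only [smul_dotProduct, smul_eq_mul] using mul_dotProduct_le h x

lemma lt_dotProduct_of_mul_lt (h : v • a ≤ u • p) {x : ι → ℕ} (hk : u * k < v * (a ⬝ᵥ x)) :
    k < p ⬝ᵥ x :=
  lt_of_mul_lt_mul_left' (hk.trans_le (mul_dotProduct_le_mul h x))

theorem dotProduct_ne_of_mem_gap (hlower : c • p ≤ a) (hupper : v • a ≤ u • p)
    (hun : u * k < v * n) (hnc : n < c * (k + 1)) (x : ι → ℕ) : a ⬝ᵥ x ≠ n := by
  rintro rfl
  have hgt : k < p ⬝ᵥ x := lt_dotProduct_of_mul_lt hupper hun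
  have hlt : p ⬝ᵥ x < k + 1 := lt_of_mul_lt_mul_left' ((mul_dotProduct_le hlower x).trans_lt hnc)
  omega

variable [DecidableEq ι]

lemma eq_single_of_mul_dotProduct_eq (hp : p i₀ = 1) (hlt : ∀ i ≠ i₀, a i₀ * p i < a i)
    {x : ι → ℕ} (heq : a i₀ * (p ⬝ᵥ x) = a ⬝ᵥ x) : x = Pi.single i₀ (p ⬝ᵥ x) := by
  have hzero : ∀ i ≠ i₀, x i = 0 := fun i hi ↦
    eq_zero_of_dotProduct_eq_of_lt (smul_le_of_forall_ne_lt hp hlt) (zero_le (a := x))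
      (by rw [smul_dotProduct, smul_eq_mul, heq]) (hlt i hi)
  have hsingle : x = Pi.single i₀ (x i₀) := by
    ext i
    obtain rfl | hi := eq_or_ne i i₀
    · rw [Pi.single_eq_same]
    · rw [Pi.single_eq_of_ne hi, hzero i hi]
  have hweight : p ⬝ᵥ x = x i₀ := by
    rw [hsingle, dotProduct_single, hp, one_mul, Pi.single_eq_same]
  rwa [hweight]

theorem dotProduct_eq_iff_eq_single (hp : p i₀ = 1) (hlt : ∀ i ≠ i₀, a i₀ * p i < a i)
    (hupper : v • a ≤ u • p) (hgap : u * k < v * (a i₀ * (k + 1))) (x : ι → ℕ) :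
    a ⬝ᵥ x = a i₀ * (k + 1) ↔ x = Pi.single i₀ (k + 1) := by
  refine ⟨fun hx ↦ ?_, ?_⟩
  · have hgt : k < p ⬝ᵥ x := lt_dotProduct_of_mul_lt hupper (hx ▸ hgap)
    have hle : a i₀ * (p ⬝ᵥ x) ≤ a i₀ * (k + 1) :=
      (mul_dotProduct_le (smul_le_of_forall_ne_lt hp hlt) x).trans_eq hx
    have heq : a i₀ * (p ⬝ᵥ x) = a i₀ * (k + 1) := hle.antisymm (Nat.mul_le_mul_left _ hgt)
    have hpos : 0 < a i₀ := Nat.pos_of_ne_zero fun h ↦ by simp [h] at hgap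
    rw [← Nat.eq_of_mul_eq_mul_left hpos heq]
    exact eq_single_of_mul_dotProduct_eq hp hlt (heq.trans hx.symm)
  · rintro rfl
    exact dotProduct_single ..

end Knapsack

open Knapsack in
theorem cuww1_frobenius_general {ι : Type*} [Fintype ι] [DecidableEq ι] {a p : ι → ℕ} {i₀ : ι}
    {u v k n : ℕ} (hp : p i₀ = 1) (hlt : ∀ i ≠ i₀, a i₀ * p i < a i) (hupper : v • a ≤ u • p)
    (hn : n + 1 = a i₀ * (k + 1)) (hgap : u * k < v * n) :
    (¬ ∃ x, a ⬝ᵥ x = n) ∧ ∀ x, a ⬝ᵥ x = n + 1 ↔ x = Pi.single i₀ (k + 1) := by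
  refine ⟨fun ⟨x, hx⟩ ↦ ?_, hn ▸ dotProduct_eq_iff_eq_single hp hlt hupper ?_⟩
  · have hlower : a i₀ • p ≤ a := smul_le_of_forall_ne_lt hp hlt
    exact dotProduct_ne_of_mem_gap hlower hupper hgap (hn ▸ n.lt_succ_self) x hx
  · exact hgap.trans_le (Nat.mul_le_mul_left v (hn ▸ n.le_succ))

theorem cuww1_frobenius :
    (¬ ∃ x : Fin 5 → ℕ,
        12223 * x 0 + 12224 * x 1 + 36674 * x 2 + 61119 * x 3 + 85569 * x 4 = 89643481) ∧
    (∀ x : Fin 5 → ℕ,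
        (12223 * x 0 + 12224 * x 1 + 36674 * x 2 + 61119 * x 3 + 85569 * x 4 = 89643482) ↔
          x = ![7334, 0, 0, 0, 0]) := by
  have hsingle : (Pi.single 0 7334 : Fin 5 → ℕ) = ![7334, 0, 0, 0, 0] := by decide
  simpa [dotProduct, Fin.sum_univ_five, hsingle] using
    cuww1_frobenius_general (a := ![12223, 12224, 36674, 61119, 85569]) (p := ![1, 1, 3, 5, 7])
      (i₀ := 0) (u := 36674) (v := 3) (k := 7333) (n := 89643481)
      rfl (by decide) (Pi.le_def.mpr (by decide)) rfl (by decide)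
end

section
/- The number of solutions in nonnegative integers (x₁,…,x₁₀) of the equation 3719x₁ + 20289x₂ + 29067x₃ + 60517x₄ + 64354x₅ + 65633x₆ + 76969x₇ + 102024x₈ + 106036x₉ + 119930x₁₀ = 13385099 is exactly 838908602000; in particular (3480, 1, 4, 4, 1, 0, 0, 0, 0, 0) is such a solution, so the equation is feasible. -/
/-!
The generating function `F` of the numbers of solutions of `∑ aᵢ xᵢ = n` is `∏ 1 / (1 - X ^ aᵢ)`.
Writing `xᵢ = εᵢ + 2 yᵢ` with `εᵢ ∈ {0, 1}` gives `F(X) = E(X) F(X²)` with `E = ∏ (1 + X ^ aᵢ)`.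
Hence, for a polynomial `P`, the coefficient of `X ^ n` in `P F = (P E) F(X²)` is the coefficient of
`X ^ (n / 2)` in `P' F`, where `P'` is the even or the odd part of `P E`, according to the parity of
`n`. Twelve such halvings, starting from `P = 1`, lead from `13385099` to the exponent `3267`, which
is below every weight, so that there `F` may be replaced by `1`.

The polynomials that occur have about a million coefficients. The computation becomes feasible by
Kronecker substitution: a polynomial is stored as its value at `2 ^ w`, whose binary digits are the
coefficients in blocks of `w` bits, and multiplication by `1 + X ^ a` is a shift followed by an
addition of large natural numbers. Since even and odd parts cannot be read off quickly from such a
number, the polynomial is first split twelve times into even and odd parts, and the `2 ^ 12`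
resulting pieces are stored separately.
-/

/-! ### Denumerants and their generating function -/

section Series

open PowerSeries

/-- Sylvester's denumerant: the number of ways to write `n` as a combination of the weights in `l`
with nonnegative integer coefficients. -/
noncomputable def denumerant (l : List ℕ) (n : ℕ) : ℕ :=
  Nat.card {x : Fin l.length → ℕ // ∑ i, l[i] * x i = n}

/-- The geometric series `1 / (1 - X ^ a)`. The coefficients are integers because
`PowerSeries.expand` requires a ring. -/
noncomputable def geomSeries (a : ℕ) : ℤ⟦X⟧ :=
  PowerSeries.mk fun n => if a ∣ n then 1 else 0

/-- The product `∏ 1 / (1 - X ^ a)` over the weights `a` in `l`, the generating function of the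
denumerants of `l`. -/
noncomputable def denumerantSeries (l : List ℕ) : ℤ⟦X⟧ :=
  (l.map geomSeries).prod

theorem coeff_prod_geomSeries {ι : Type*} [Fintype ι] {a : ι → ℕ} (ha : ∀ i, 0 < a i) (n : ℕ) :
    coeff n (∏ i, geomSeries (a i)) = Nat.card {x : ι → ℕ // ∑ i, a i * x i = n} := by
  classical
  simp only [coeff_prod, geomSeries, coeff_mk, Finset.prod_boole, Finset.mem_univ, true_imp_iff,
    Finset.sum_boole, Nat.cast_inj]
  rw [← Nat.card_eq_finsetCard]
  -- A decomposition of `n` into multiples `y i` of `a i` corresponds to the solution `y i / a i`.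
  exact Nat.card_congr
    { toFun y := ⟨fun i => y.1 i / a i, by
        obtain ⟨hsum, hdvd⟩ := Finset.mem_filter.1 y.2
        simpa [Nat.mul_div_cancel' (hdvd _)] using (Finset.mem_finsuppAntidiag.1 hsum).1⟩
      invFun x := ⟨Finsupp.equivFunOnFinite.symm fun i => a i * x.1 i, by
        simp [Finset.mem_finsuppAntidiag, x.2]⟩
      left_inv y := by
        ext i
        simpa using Nat.mul_div_cancel' ((Finset.mem_filter.1 y.2).2 i)
      right_inv x := by
        ext i
        simp [ha i] }

theorem coeff_denumerantSeries {l : List ℕ} (hl : ∀ a ∈ l, 0 < a) (n : ℕ) :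
    coeff n (denumerantSeries l) = denumerant l n := by
  rw [denumerantSeries, ← Fin.prod_univ_fun_getElem]
  exact coeff_prod_geomSeries (fun i => hl _ (l.getElem_mem i.2)) n

theorem geomSeries_mul_one_sub_X_pow {a : ℕ} (ha : a ≠ 0) : geomSeries a * (1 - X ^ a) = 1 := by
  have h : geomSeries a = expand a ha (mk 1) := by
    ext n
    simp [geomSeries, coeff_expand]
  rw [h, ← expand_X a ha, ← map_one (expand a ha), ← map_sub, ← map_mul,
    mk_one_mul_one_sub_eq_one]

theorem geomSeries_eq_mul_expand {a : ℕ} (ha : a ≠ 0) :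
    geomSeries a = (1 + X ^ a) * expand 2 two_ne_zero (geomSeries a) := by
  have h : expand 2 two_ne_zero (geomSeries a) * (1 - X ^ (2 * a)) = 1 := by
    simpa [pow_mul] using
      congrArg (expand 2 two_ne_zero) (geomSeries_mul_one_sub_X_pow ha)
  refine left_inv_eq_right_inv (geomSeries_mul_one_sub_X_pow ha) ?_
  linear_combination h

theorem coeff_mul_geomSeries_of_lt {a n : ℕ} (h : n < a) (f : ℤ⟦X⟧) :
    coeff n (f * geomSeries a) = coeff n f := by
  have hgeom : geomSeries a = 1 + X ^ a * geomSeries a := by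
    linear_combination geomSeries_mul_one_sub_X_pow (Nat.ne_zero_of_lt h)
  rw [hgeom, mul_add, mul_one, mul_left_comm, map_add, coeff_X_pow_mul', if_neg h.not_ge, add_zero]

theorem coeff_mul_denumerantSeries_of_lt {l : List ℕ} {n : ℕ} (h : ∀ a ∈ l, n < a) (f : ℤ⟦X⟧) :
    coeff n (f * denumerantSeries l) = coeff n f := by
  induction l generalizing f with
  | nil => simp [denumerantSeries]
  | cons a l ih =>
    obtain ⟨ha, hl⟩ := List.forall_mem_cons.1 h
    rw [denumerantSeries, List.map_cons, List.prod_cons, ← mul_assoc]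
    exact (ih hl _).trans (coeff_mul_geomSeries_of_lt ha f)

theorem coeff_mul_expand {R : Type*} [CommRing R] {m r : ℕ} (hr : r < m) (f g : R⟦X⟧) (i : ℕ) :
    coeff (i * m + r) (f * expand m (Nat.ne_zero_of_lt hr) g) =
      ∑ x ∈ Finset.HasAntidiagonal.antidiagonal i, coeff (x.1 * m + r) f * coeff x.2 g := by
  rw [coeff_mul]
  symm
  refine Finset.sum_of_injOn (fun x => (x.1 * m + r, m * x.2)) ?_ ?_ ?_ ?_
  · rintro ⟨j, k⟩ - ⟨j', k'⟩ - h
    have hm : m ≠ 0 := Nat.ne_zero_of_lt hr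
    simpa [hm] using h
  · rintro ⟨j, k⟩ h
    have h : j + k = i := by simpa using h
    simp only [Finset.mem_coe, Finset.HasAntidiagonal.mem_antidiagonal, ← h]
    ring
  · rintro ⟨j, k⟩ h hne
    have hk : ¬ m ∣ k := by
      rintro ⟨k, rfl⟩
      have h : j + m * k = i * m + r := by simpa using h
      have hmod : j % m = r := by
        simpa [Nat.mod_eq_of_lt hr] using congrArg (· % m) h
      have hj : j / m * m + r = j := by rw [← hmod, Nat.div_add_mod']
      have hi : j / m + k = i := by
        refine Nat.eq_of_mul_eq_mul_right (Nat.zero_lt_of_lt hr) ?_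
        linarith
      exact hne ⟨(j / m, k), by simpa using hi, by simp [hj]⟩
    rw [coeff_expand_of_not_dvd _ _ _ hk, mul_zero]
  · simp

end Series

/-! ### Halving the exponent -/

section Halving

open Polynomial

section Decimate

variable {R : Type*} [CommSemiring R]

/-- The `r`-th section of `p` modulo `m`, that is, the polynomial whose coefficients are the
coefficients of `p` at the exponents `r, r + m, r + 2 m, …`. -/
noncomputable def decimate (m r : ℕ) (p : R[X]) : R[X] :=
  contract m (divX^[r] p)

theorem coeff_decimate {m : ℕ} (hm : m ≠ 0) (r : ℕ) (p : R[X]) (i : ℕ) :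
    (decimate m r p).coeff i = p.coeff (i * m + r) := by
  have coeff_iterate_divX (j : ℕ) : (divX^[r] p).coeff j = p.coeff (j + r) := by
    induction r generalizing p with
    | zero => rfl
    | succ r ih => rw [Function.iterate_succ_apply, ih, coeff_divX, add_assoc]
  rw [decimate, coeff_contract hm, coeff_iterate_divX]

theorem decimate_add {m : ℕ} (hm : m ≠ 0) (r : ℕ) (p q : R[X]) :
    decimate m r (p + q) = decimate m r p + decimate m r q := by
  ext i
  simp [coeff_decimate hm]

theorem decimate_zero_C (m : ℕ) (c : R) : decimate m 0 (C c) = C c :=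
  contract_C m c

theorem decimate_succ_C {m : ℕ} (hm : m ≠ 0) (r : ℕ) (c : R) : decimate m (r + 1) (C c) = 0 := by
  ext i
  simp [coeff_decimate hm, coeff_C]

theorem decimate_zero_X_mul (m : ℕ) (p : R[X]) :
    decimate (m + 1) 0 (X * p) = X * decimate (m + 1) m p := by
  ext i
  cases i with
  | zero => simp [coeff_decimate]
  | succ i => simp [coeff_decimate, coeff_X_mul, add_mul, ← add_assoc]

theorem decimate_succ_X_mul {m : ℕ} (hm : m ≠ 0) (r : ℕ) (p : R[X]) :
    decimate m (r + 1) (X * p) = decimate m r p := by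
  ext i
  rw [coeff_decimate hm, coeff_decimate hm, ← add_assoc, coeff_X_mul]

theorem decimate_X_pow_mul {m r : ℕ} (hr : r < m) (b : ℕ) (p : R[X]) :
    decimate m r (X ^ (m * b) * p) = X ^ b * decimate m r p := by
  ext i
  rw [coeff_decimate (Nat.ne_zero_of_lt hr), coeff_X_pow_mul', coeff_X_pow_mul']
  rcases le_or_gt b i with h | h
  · obtain ⟨c, rfl⟩ := Nat.exists_eq_add_of_le h
    have hexp : (b + c) * m + r = c * m + r + m * b := by ring
    rw [hexp, if_pos (Nat.le_add_left ..), if_pos h, Nat.add_sub_cancel, Nat.add_sub_cancel_left,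
      coeff_decimate (Nat.ne_zero_of_lt hr)]
  · have hexp : i * m + r < m * b := by nlinarith
    rw [if_neg hexp.not_ge, if_neg h.not_ge]

end Decimate

/-- A polynomial with natural coefficients as an integral power series. -/
noncomputable def toIntSeries : ℕ[X] →+* PowerSeries ℤ :=
  coeToPowerSeries.ringHom.comp (mapRingHom (Nat.castRingHom ℤ))

theorem coeff_toIntSeries (p : ℕ[X]) (n : ℕ) : (toIntSeries p).coeff n = p.coeff n := by
  simp [toIntSeries]

theorem toIntSeries_X : toIntSeries X = PowerSeries.X := by
  simp [toIntSeries]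

theorem coeff_toIntSeries_mul_expand {m r : ℕ} (hr : r < m) (p : ℕ[X]) (f : PowerSeries ℤ)
    (i : ℕ) :
    (toIntSeries p * f.expand m (Nat.ne_zero_of_lt hr)).coeff (i * m + r) =
      (toIntSeries (decimate m r p) * f).coeff i := by
  simp [coeff_mul_expand hr, PowerSeries.coeff_mul, coeff_toIntSeries,
    coeff_decimate (Nat.ne_zero_of_lt hr)]

/-- The product `∏ (1 + X ^ a)` over the weights `a` in `l`, the generating function of the sums of
sublists of `l`. -/
noncomputable def sublistSumPoly (l : List ℕ) : ℕ[X] :=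
  (l.map fun a => 1 + X ^ a).prod

theorem mul_sublistSumPoly_cons (a : ℕ) (l : List ℕ) (p : ℕ[X]) :
    p * sublistSumPoly (a :: l) = (p + X ^ a * p) * sublistSumPoly l := by
  simp only [sublistSumPoly, List.map_cons, List.prod_cons]
  ring

theorem coeff_mul_sublistSumPoly_le {p : ℕ[X]} {C : ℕ} (hp : ∀ i, p.coeff i ≤ C) (l : List ℕ)
    (i : ℕ) : (p * sublistSumPoly l).coeff i ≤ C * 2 ^ l.length := by
  induction l generalizing p C with
  | nil => simpa [sublistSumPoly] using hp i
  | cons a l ih =>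
    have hstep (j : ℕ) : (p + X ^ a * p).coeff j ≤ C * 2 := by
      have := hp j
      have := hp (j - a)
      rw [coeff_add, coeff_X_pow_mul']
      split_ifs <;> omega
    rw [mul_sublistSumPoly_cons, List.length_cons, pow_succ', ← mul_assoc]
    exact ih hstep

theorem denumerantSeries_eq_mul_expand {l : List ℕ} (hl : ∀ a ∈ l, a ≠ 0) :
    denumerantSeries l =
      toIntSeries (sublistSumPoly l) * (denumerantSeries l).expand 2 two_ne_zero := by
  simp only [denumerantSeries, sublistSumPoly, map_list_prod, List.map_map, ← List.prod_map_mul]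
  congr 1
  refine List.map_congr_left fun a ha => ?_
  simpa [toIntSeries_X] using geomSeries_eq_mul_expand (hl a ha)

theorem coeff_toIntSeries_mul_denumerantSeries {l : List ℕ} (hl : ∀ a ∈ l, a ≠ 0) (p : ℕ[X])
    (n : ℕ) :
    (toIntSeries p * denumerantSeries l).coeff n =
      (toIntSeries (decimate 2 (n % 2) (p * sublistSumPoly l)) * denumerantSeries l).coeff
        (n / 2) := by
  rw [← coeff_toIntSeries_mul_expand (Nat.mod_lt n two_pos), Nat.div_add_mod', toIntSeries.map_mul,
    mul_assoc, ← denumerantSeries_eq_mul_expand hl]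

end Halving

/-! ### Packed polynomials -/

section Kronecker

open Polynomial

theorem eval_mod_self {B : ℕ} (p : ℕ[X]) (hp : p.coeff 0 < B) : p.eval B % B = p.coeff 0 := by
  conv_lhs => rw [← divX_mul_X_add p]
  simp [Nat.mod_eq_of_lt hp]

theorem eval_div_self {B : ℕ} (p : ℕ[X]) (hp : p.coeff 0 < B) :
    p.eval B / B = p.divX.eval B := by
  conv_lhs => rw [← divX_mul_X_add p]
  simp [Nat.add_div_of_dvd_right, Nat.div_eq_of_lt hp, Nat.ne_zero_of_lt hp]

theorem eval_div_pow_mod {B : ℕ} {p : ℕ[X]} (hp : ∀ i, p.coeff i < B) (n : ℕ) :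
    p.eval B / B ^ n % B = p.coeff n := by
  induction n generalizing p with
  | zero => rw [pow_zero, Nat.div_one, eval_mod_self p (hp 0)]
  | succ n ih =>
    rw [pow_succ', ← Nat.div_div_eq_div_mul, eval_div_self p (hp 0),
      ih fun i => by simpa using hp (i + 1), coeff_divX]

end Kronecker

/-- Polynomials with natural coefficients, split `k` times into even and odd parts, where each of
the `2 ^ k` resulting polynomials is represented by a natural number. -/
abbrev PackedPoly : ℕ → Type
  | 0 => ℕ
  | k + 1 => PackedPoly k × PackedPoly k

namespace PackedPoly

open Polynomial

variable {w k : ℕ}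

/-- The packed form of a polynomial, in which each of the `2 ^ k` pieces is represented by its value
at `2 ^ w`. -/
noncomputable def pack (w : ℕ) : ∀ k, ℕ[X] → PackedPoly k
  | 0, p => (p.eval (2 ^ w) : ℕ)
  | k + 1, p => (pack w k (decimate 2 0 p), pack w k (decimate 2 1 p))

/-- The packed form of the constant polynomial `c`. -/
def const (c : ℕ) : ∀ k, PackedPoly k
  | 0 => (c : ℕ)
  | k + 1 => (const c k, const 0 k)

/-- Addition of packed polynomials. -/
def add : ∀ {k}, PackedPoly k → PackedPoly k → PackedPoly k
  | 0, (m : ℕ), (n : ℕ) => (m + n : ℕ)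
  | _ + 1, s, t => (add s.1 t.1, add s.2 t.2)

/-- Multiplication of a packed polynomial by `X ^ a`, which exchanges the even and the odd part if
`a` is odd. -/
def shift (w : ℕ) : ∀ {k}, ℕ → PackedPoly k → PackedPoly k
  | 0, a, (n : ℕ) => (n <<< (w * a) : ℕ)
  | _ + 1, a, t =>
    if a % 2 = 0 then (shift w (a / 2) t.1, shift w (a / 2) t.2)
    else (shift w (a / 2 + 1) t.2, shift w (a / 2) t.1)

/-- Multiplication of a packed polynomial by `∏ (1 + X ^ a)` over the weights `a` in a list. -/
def mulSublistSum (w : ℕ) : List ℕ → PackedPoly k → PackedPoly k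
  | [], t => t
  | a :: l, t => mulSublistSum w l (add t (shift w a t))

/-- The coefficient of `X ^ n` in the product of a packed polynomial and the generating function of
the denumerants of `l`, computed by `k` halvings of `n`. -/
def halvingCoeff (w : ℕ) (l : List ℕ) : ∀ {k}, ℕ → PackedPoly k → ℕ
  | 0, n, (v : ℕ) => v >>> (w * n) % 2 ^ w
  | _ + 1, n, t =>
    if n % 2 = 0 then halvingCoeff w l (n / 2) (mulSublistSum w l t).1
    else halvingCoeff w l (n / 2) (mulSublistSum w l t).2

theorem const_eq_pack (w c k : ℕ) : const c k = pack w k (C c) := by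
  induction k generalizing c with
  | zero => exact eval_C.symm
  | succ k ih =>
    rw [const, pack, decimate_zero_C, decimate_succ_C two_ne_zero, ih, ih, C_0]

theorem add_pack (p q : ℕ[X]) : add (pack w k p) (pack w k q) = pack w k (p + q) := by
  induction k generalizing p q with
  | zero => exact eval_add.symm
  | succ k ih => simp only [add, pack, ih, decimate_add two_ne_zero]

theorem shift_pack (a : ℕ) (p : ℕ[X]) : shift w a (pack w k p) = pack w k (X ^ a * p) := by
  induction k generalizing a p with
  | zero => simp [shift, pack, Nat.shiftLeft_eq, pow_mul, mul_comm]
  | succ k ih =>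
    rcases Nat.even_or_odd' a with ⟨b, rfl | rfl⟩
    · simp [shift, pack, ih, decimate_X_pow_mul]
    · have hb : (2 * b + 1) / 2 = b := by omega
      simp [shift, pack, ih, hb, pow_succ, mul_assoc, decimate_X_pow_mul, decimate_zero_X_mul,
        decimate_succ_X_mul]

theorem mulSublistSum_pack (l : List ℕ) (p : ℕ[X]) :
    mulSublistSum w l (pack w k p) = pack w k (p * sublistSumPoly l) := by
  induction l generalizing p with
  | nil => simp [mulSublistSum, sublistSumPoly]
  | cons a l ih => rw [mulSublistSum, shift_pack, add_pack, ih, mul_sublistSumPoly_cons]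

theorem halvingCoeff_succ_pack (l : List ℕ) (n : ℕ) (p : ℕ[X]) :
    halvingCoeff w l n (pack w (k + 1) p) =
      halvingCoeff w l (n / 2) (pack w k (decimate 2 (n % 2) (p * sublistSumPoly l))) := by
  rw [halvingCoeff, mulSublistSum_pack]
  rcases Nat.mod_two_eq_zero_or_one n with h | h <;> simp [h, pack]

theorem halvingCoeff_pack {l : List ℕ} {n C : ℕ} {p : ℕ[X]} (hl : ∀ a ∈ l, n / 2 ^ k < a)
    (hp : ∀ i, p.coeff i ≤ C) (hC : C * 2 ^ (l.length * k) < 2 ^ w) :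
    halvingCoeff w l n (pack w k p) = (toIntSeries p * denumerantSeries l).coeff n := by
  induction k generalizing n C p with
  | zero =>
    have hlt (i : ℕ) : p.coeff i < 2 ^ w := (hp i).trans_lt (by simpa using hC)
    rw [coeff_mul_denumerantSeries_of_lt (by simpa using hl), coeff_toIntSeries,
      halvingCoeff, pack, Nat.shiftRight_eq_div_pow, pow_mul, eval_div_pow_mod hlt]
  | succ k ih =>
    have hpos (a : ℕ) (ha : a ∈ l) : a ≠ 0 := Nat.ne_zero_of_lt (hl a ha)
    rw [halvingCoeff_succ_pack, coeff_toIntSeries_mul_denumerantSeries hpos]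
    refine ih (C := C * 2 ^ l.length) ?_ ?_ ?_
    · rwa [Nat.div_div_eq_div_mul, ← pow_succ']
    · intro i
      rw [coeff_decimate two_ne_zero]
      exact coeff_mul_sublistSumPoly_le hp l _
    · rwa [mul_assoc, ← pow_add, add_comm, ← Nat.mul_succ]

end PackedPoly

/-- Each of the `k` halvings multiplies the coefficients at most by `2 ^ l.length`, so that none of
them overflows its block of `w` bits. -/
theorem denumerant_eq_halvingCoeff {l : List ℕ} {n k w : ℕ} (hl : ∀ a ∈ l, n / 2 ^ k < a)
    (hw : l.length * k < w) :
    denumerant l n = PackedPoly.halvingCoeff w l n (PackedPoly.const 1 k) := by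
  have hcoeff (i : ℕ) : (1 : Polynomial ℕ).coeff i ≤ 1 := by
    rw [Polynomial.coeff_one]
    split_ifs <;> simp
  have h := PackedPoly.halvingCoeff_pack hl hcoeff
    (by simpa using Nat.pow_lt_pow_right one_lt_two hw)
  rw [map_one, one_mul, coeff_denumerantSeries fun a ha => Nat.zero_lt_of_lt (hl a ha),
    ← Polynomial.C_1, ← PackedPoly.const_eq_pack] at h
  exact_mod_cast h.symm

/-- The weights of the instance prob9. -/
def prob9Weights : List ℕ :=
  [3719, 20289, 29067, 60517, 64354, 65633, 76969, 102024, 106036, 119930]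

theorem denumerant_prob9Weights : denumerant prob9Weights 13385099 = 838908602000 := by
  rw [denumerant_eq_halvingCoeff (k := 12) (w := 121) (by simp [prob9Weights])
    (by simp [prob9Weights])]
  decide +kernel

theorem prob9_count :
    Nat.card {x : Fin 10 → ℕ //
        3719 * x 0 + 20289 * x 1 + 29067 * x 2 + 60517 * x 3 + 64354 * x 4 +
          65633 * x 5 + 76969 * x 6 + 102024 * x 7 + 106036 * x 8 + 119930 * x 9 =
          13385099} = 838908602000 ∧
    3719 * 3480 + 20289 * 1 + 29067 * 4 + 60517 * 4 + 64354 * 1 +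
        65633 * 0 + 76969 * 0 + 102024 * 0 + 106036 * 0 + 119930 * 0 = 13385099 := by
  refine ⟨?_, by norm_num⟩
  rw [← denumerant_prob9Weights]
  refine Nat.card_congr (Equiv.subtypeEquivRight fun x : Fin 10 → ℕ => ?_)
  change _ ↔ ∑ i : Fin 10, prob9Weights[i] * x i = 13385099
  simp [Fin.sum_univ_succ, prob9Weights, add_assoc]
end

section
/- Consider the set S of vectors x ∈ ℤ⁸ with all coordinates nonnegative satisfying 25067x₁ + 49300x₂ + 49717x₃ + 62124x₄ + 87608x₅ + 88025x₆ + 113673x₇ + 119169x₈ = 33367336, and the linear objective c·x = 213x₁ − 1928x₂ − 11111x₃ − 2345x₄ + 9123x₅ − 12834x₆ − 123x₇ + 122331x₈. Then the maximum of c·x over S equals 9257735, and it is attained at exactly one point of S, namely x = (966, 5, 0, 0, 1, 0, 0, 74). -/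
/-!
The weights are an aggregation `a = 11409 p + 1832 q` of two rows with one-digit entries. The pairs
`(p · x, q · x)` compatible with `a · x = b` form a progression of step `(1832, -11409)`, and the
inequalities `9 (p · x) - 4 (q · x) ≥ 0` and `5 (p · x) + 3 (q · x) ≥ 0`, valid for `x ≥ 0`, exclude
all of them but `(3592, -4156)`.

For the program with these two equations the LP-optimal basis is `{x₁, x₈}`. Its dual solution
expresses `6 (c · x)` as `57224564` minus nonnegative reduced costs, and `5 p + 3 q` eliminates
`x₁`, so that integrality of `x₈` becomes a congruence on `x₂, …, x₇`: their weight under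
`5 p + 3 q` is `20` modulo `72`. This is Gomory's group problem. A reduced cost of at most
`57224564 - 6 * 9257735 = 1678154` only affords the weights `20`, `92` and `164`; the first two are
not sums of the available weights, and the third has a single affordable representation.
-/

open Matrix

section General

variable {m n R : Type*} [Fintype m] [Fintype n]

theorem forall_le_and_mem_eq_iff_of_forall_le_imp_eq {α β : Type*} [LinearOrder β] {s : Set α}
    {f : α → β} {x₀ : α} (hx₀ : x₀ ∈ s) (h : ∀ x ∈ s, f x₀ ≤ f x → x = x₀) :
    (∀ x ∈ s, f x ≤ f x₀) ∧ ∀ x, x ∈ s ∧ f x = f x₀ ↔ x = x₀ := by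
  refine ⟨fun x hx ↦ ?_, fun x ↦ ⟨fun ⟨hx, hfx⟩ ↦ h x hx hfx.ge, ?_⟩⟩
  · rcases le_total (f x) (f x₀) with hle | hge
    · exact hle
    · rw [h x hx hge]
  · rintro rfl
    exact ⟨hx₀, rfl⟩

theorem exists_eq_smul_of_dotProduct_eq_zero [CommRing R] {u e : Fin 2 → R}
    (hu : IsCoprime (u 0) (u 1)) (h : u ⬝ᵥ e = 0) : ∃ t : R, e = t • ![u 1, -u 0] := by
  obtain ⟨r, s, hrs⟩ := hu
  rw [dotProduct, Fin.sum_univ_two] at h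
  refine ⟨s * e 0 - r * e 1, funext fun i ↦ ?_⟩
  fin_cases i
  · change e 0 = (s * e 0 - r * e 1) * u 1
    linear_combination -e 0 * hrs + r * h
  · change e 1 = (s * e 0 - r * e 1) * -u 0
    linear_combination -e 1 * hrs + s * h

theorem dotProduct_mulVec_nonneg [Semiring R] [PartialOrder R] [IsOrderedRing R]
    {A : Matrix m n R} {y : m → R} {x : n → R} (hy : 0 ≤ y ᵥ* A) (hx : 0 ≤ x) :
    0 ≤ y ⬝ᵥ A *ᵥ x := by
  rw [dotProduct_mulVec]
  exact dotProduct_nonneg_of_nonneg hy hx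

theorem dotProduct_add_mul_dotProduct_eq [Semiring R] {A : Matrix m n R} {y : m → R}
    {c r : n → R} {k : R} (h : r + k • c = y ᵥ* A) (x : n → R) :
    r ⬝ᵥ x + k * (c ⬝ᵥ x) = y ⬝ᵥ A *ᵥ x := by
  rw [dotProduct_mulVec, ← h, add_dotProduct, smul_dotProduct, smul_eq_mul]

theorem nonneg_of_nonneg_add_mul {a b t : ℤ} (ha : a ∈ Set.Ico 0 b) (h : 0 ≤ a + t * b) :
    0 ≤ t := by
  obtain ⟨ha₀, hab⟩ := ha
  by_contra! ht
  nlinarith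

theorem mulVec_eq_of_vecMul_dotProduct_eq {A : Matrix m n ℤ} {u d z y₁ y₂ : m → ℤ} {x : n → ℤ}
    (hd : ∀ e, u ⬝ᵥ e = 0 → ∃ t : ℤ, e = t • d) (hy₁ : 0 ≤ y₁ ᵥ* A) (hy₂ : 0 ≤ y₂ ᵥ* A)
    (hz₁ : y₁ ⬝ᵥ z ∈ Set.Ico 0 (y₁ ⬝ᵥ d)) (hz₂ : y₂ ⬝ᵥ z ∈ Set.Ico 0 (-(y₂ ⬝ᵥ d)))
    (hx : 0 ≤ x) (h : (u ᵥ* A) ⬝ᵥ x = u ⬝ᵥ z) : A *ᵥ x = z := by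
  obtain ⟨t, ht⟩ := hd (A *ᵥ x - z) (by rw [dotProduct_sub, dotProduct_mulVec, h, sub_self])
  have hAx : A *ᵥ x = z + t • d := by rw [← ht, add_sub_cancel]
  have hvalid (y : m → ℤ) (hy : 0 ≤ y ᵥ* A) : 0 ≤ y ⬝ᵥ z + t * (y ⬝ᵥ d) := by
    simpa only [hAx, dotProduct_add, dotProduct_smul, smul_eq_mul]
      using dotProduct_mulVec_nonneg hy hx
  have ht_nonneg : 0 ≤ t := nonneg_of_nonneg_add_mul hz₁ (hvalid y₁ hy₁)
  have ht_nonpos : 0 ≤ -t := nonneg_of_nonneg_add_mul hz₂ (by rw [neg_mul_neg]; exact hvalid y₂ hy₂)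
  rw [hAx, show t = 0 by lia, zero_smul, add_zero]

end General

section GroupProblem

variable {x₂ x₃ x₄ x₅ x₆ x₇ : ℤ}

theorem eq_of_groupWeight_eq_164 (h₂ : 0 ≤ x₂) (h₃ : 0 ≤ x₃) (h₄ : 0 ≤ x₄) (h₅ : 0 ≤ x₅)
    (h₆ : 0 ≤ x₆) (h₇ : 0 ≤ x₇)
    (hweight : 26 * x₂ + 13 * x₃ + 47 * x₄ + 34 * x₅ + 21 * x₆ + 63 * x₇ = 164)
    (hcost : 276938 * x₂ + 200629 * x₃ + 492401 * x₄ + 293464 * x₅ + 293799 * x₆ + 643455 * x₇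
      ≤ 1678154) :
    x₂ = 5 ∧ x₃ = 0 ∧ x₄ = 0 ∧ x₅ = 1 ∧ x₆ = 0 ∧ x₇ = 0 := by
  -- `17` times the cost in excess of `293464 / 34`, the ratio of `x₅`, per unit of weight.
  have hexcess : 892914 * x₂ + 1503177 * x₃ + 1474413 * x₄ + 1913211 * x₆ + 1694619 * x₇
      ≤ 4464570 := by
    linarith
  obtain rfl : x₇ = 0 := by
    have : x₇ ≤ 2 := by linarith
    interval_cases x₇ <;> omega
  obtain rfl : x₄ = 0 := by
    have : x₄ ≤ 3 := by linarith
    interval_cases x₄ <;> omega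
  obtain rfl : x₆ = 0 := by
    have : x₆ ≤ 2 := by linarith
    interval_cases x₆ <;> omega
  obtain rfl : x₃ = 0 := by
    have : x₃ ≤ 2 := by linarith
    interval_cases x₃ <;> omega
  omega

theorem eq_of_groupWeight_modEq (h₂ : 0 ≤ x₂) (h₃ : 0 ≤ x₃) (h₄ : 0 ≤ x₄) (h₅ : 0 ≤ x₅)
    (h₆ : 0 ≤ x₆) (h₇ : 0 ≤ x₇)
    (hweight : 26 * x₂ + 13 * x₃ + 47 * x₄ + 34 * x₅ + 21 * x₆ + 63 * x₇ ≡ 20 [ZMOD 72])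
    (hcost : 276938 * x₂ + 200629 * x₃ + 492401 * x₄ + 293464 * x₅ + 293799 * x₆ + 643455 * x₇
      ≤ 1678154) :
    x₂ = 5 ∧ x₃ = 0 ∧ x₄ = 0 ∧ x₅ = 1 ∧ x₆ = 0 ∧ x₇ = 0 := by
  -- Every unit of weight costs at least `293464 / 34`, the ratio of `x₅`.
  have hle : 26 * x₂ + 13 * x₃ + 47 * x₄ + 34 * x₅ + 21 * x₆ + 63 * x₇ ≤ 194 := by lia
  have hne_20 : 26 * x₂ + 13 * x₃ + 47 * x₄ + 34 * x₅ + 21 * x₆ + 63 * x₇ ≠ 20 := by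
    clear hweight hcost
    omega
  have hne_92 : 26 * x₂ + 13 * x₃ + 47 * x₄ + 34 * x₅ + 21 * x₆ + 63 * x₇ ≠ 92 := by
    clear hweight hcost
    omega
  refine eq_of_groupWeight_eq_164 h₂ h₃ h₄ h₅ h₆ h₇ ?_ hcost
  rw [Int.ModEq] at hweight
  omega

end GroupProblem

section Program

/-- The coefficient vector `a` of the knapsack equation. -/
def knapsackWeights : Fin 8 → ℤ :=
  ![25067, 49300, 49717, 62124, 87608, 88025, 113673, 119169]

/-- The objective vector `c`. -/
def profits : Fin 8 → ℤ := ![213, -1928, -11111, -2345, 9123, -12834, -123, 122331]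

/-- The optimal solution, with objective value `9257735`. -/
def optimum : Fin 8 → ℤ := ![966, 5, 0, 0, 1, 0, 0, 74]

/-- The rows `p` and `q` of the two equations into which the knapsack equation splits. -/
def splitMatrix : Matrix (Fin 2) (Fin 8) ℤ :=
  !![3, 4, 5, 4, 8, 9, 9, 9; -5, 2, -4, 9, -2, -8, 6, 9]

/-- Six times the reduced costs of the split program at its LP-optimal basis `{x₁, x₈}`; the factor
clears the denominators of the dual solution `(51131 / 6, 30423 / 6)`. -/
def scaledReducedCosts : Fin 8 → ℤ := ![0, 276938, 200629, 492401, 293464, 293799, 643455, 0]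

theorem vecMul_splitMatrix_eq_knapsackWeights :
    ![11409, 1832] ᵥ* splitMatrix = knapsackWeights := by
  decide

theorem scaledReducedCosts_add_smul_profits :
    scaledReducedCosts + (6 : ℤ) • profits = ![51131, 30423] ᵥ* splitMatrix := by
  decide

theorem five_three_vecMul_splitMatrix :
    ![5, 3] ᵥ* splitMatrix = ![0, 26, 13, 47, 34, 21, 63, 72] := by
  decide

variable {x : Fin 8 → ℤ}

theorem splitMatrix_mulVec_eq (hx : 0 ≤ x) (h : knapsackWeights ⬝ᵥ x = 33367336) :
    splitMatrix *ᵥ x = ![3592, -4156] := by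
  have hcoprime : IsCoprime (11409 : ℤ) 1832 := by norm_num
  -- The valid inequalities are tight at `x₄` and `x₁`, the extreme ratios `qᵢ / pᵢ`.
  refine mulVec_eq_of_vecMul_dotProduct_eq (u := ![11409, 1832]) (y₁ := ![9, -4]) (y₂ := ![5, 3])
    (fun e he ↦ exists_eq_smul_of_dotProduct_eq_zero hcoprime he)
    (Pi.le_def.2 <| by decide) (Pi.le_def.2 <| by decide) (by decide) (by decide) hx ?_
  rw [vecMul_splitMatrix_eq_knapsackWeights, h]
  decide

theorem eq_optimum_of_le_profits (hx : 0 ≤ x) (h : knapsackWeights ⬝ᵥ x = 33367336)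
    (hopt : 9257735 ≤ profits ⬝ᵥ x) : x = optimum := by
  have hsplit : splitMatrix *ᵥ x = ![3592, -4156] := splitMatrix_mulVec_eq hx h
  have hdual := dotProduct_add_mul_dotProduct_eq scaledReducedCosts_add_smul_profits x
  have hdual_value : ![51131, 30423] ⬝ᵥ ![3592, -4156] = (57224564 : ℤ) := by decide
  have hcost : scaledReducedCosts ⬝ᵥ x ≤ 1678154 := by
    rw [hsplit, hdual_value] at hdual
    linarith
  have helim : ![0, 26, 13, 47, 34, 21, 63, 72] ⬝ᵥ x = 5492 := by
    rw [← five_three_vecMul_splitMatrix, ← dotProduct_mulVec, hsplit]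
    decide
  replace helim : 26 * x 1 + 13 * x 2 + 47 * x 3 + 34 * x 4 + 21 * x 5 + 63 * x 6 + 72 * x 7 =
      5492 := by
    simpa [dotProduct, Fin.sum_univ_eight] using helim
  obtain ⟨h₂, h₃, h₄, h₅, h₆, h₇⟩ :=
    eq_of_groupWeight_modEq (hx 1) (hx 2) (hx 3) (hx 4) (hx 5) (hx 6)
      (Int.modEq_iff_dvd.2 ⟨x 7 - 76, by linarith⟩)
      (by simpa [scaledReducedCosts, dotProduct, Fin.sum_univ_eight] using hcost)
  have h₈ : x 7 = 74 := by linarith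
  have h₁ : x 0 = 966 := by
    simp only [knapsackWeights, dotProduct, Fin.sum_univ_eight, cons_val, h₂, h₃, h₄, h₅, h₆, h₇,
      h₈] at h
    linarith
  funext i
  fin_cases i <;> assumption

end Program

theorem prob1_integer_program :
    (∀ x : Fin 8 → ℤ, (∀ i, 0 ≤ x i) →
        25067 * x 0 + 49300 * x 1 + 49717 * x 2 + 62124 * x 3 + 87608 * x 4 +
            88025 * x 5 + 113673 * x 6 + 119169 * x 7 = 33367336 →
        213 * x 0 - 1928 * x 1 - 11111 * x 2 - 2345 * x 3 + 9123 * x 4 -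
            12834 * x 5 - 123 * x 6 + 122331 * x 7 ≤ 9257735) ∧
    (∀ x : Fin 8 → ℤ,
        ((∀ i, 0 ≤ x i) ∧
          25067 * x 0 + 49300 * x 1 + 49717 * x 2 + 62124 * x 3 + 87608 * x 4 +
              88025 * x 5 + 113673 * x 6 + 119169 * x 7 = 33367336 ∧
          213 * x 0 - 1928 * x 1 - 11111 * x 2 - 2345 * x 3 + 9123 * x 4 -
              12834 * x 5 - 123 * x 6 + 122331 * x 7 = 9257735) ↔
          x = ![966, 5, 0, 0, 1, 0, 0, 74]) := by
  have hvalue : profits ⬝ᵥ optimum = 9257735 := by decide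
  have hmax := forall_le_and_mem_eq_iff_of_forall_le_imp_eq
    (s := {x | 0 ≤ x ∧ knapsackWeights ⬝ᵥ x = 33367336}) (f := (profits ⬝ᵥ ·)) (x₀ := optimum)
    ⟨Pi.le_def.2 <| by decide, by decide⟩
    fun x ⟨hx, h⟩ hopt ↦ eq_optimum_of_le_profits hx h (hvalue ▸ hopt)
  simpa [hvalue, knapsackWeights, profits, optimum, dotProduct, Fin.sum_univ_eight, Pi.le_def,
    sub_eq_add_neg, and_assoc] using hmax
end
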